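/- arXiv:2406.12811 — 2 statements merged into one kernel-verified Lean document; each statement's English description precedes it below -/
import Mathlib

section
/- Every finitary finite-matching-extendable matroid whose ground set is countable is matchable; that is, if M is a finitary f.m.e. matroid with countable ground set, then the ground set of M can be partitioned into circuits of M. -/
/-!
Order the finite matchings by inclusion. Finite matching extendability says exactly that, for each
element `e` of the ground set, the finite matchings covering `e` are cofinal. There are countably
many such conditions, so by the Rasiowa–Sikorski lemma some directed family of finite matchings
meets all of them; its union is again a matching, and it covers every element.
-/

open Set Function

variable {α : Type*}

/-- A circuit of a matroid `M`: a minimal dependent set. -/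
def Matroid.IsCircuit' (M : Matroid α) (C : Set α) : Prop := Minimal M.Dep C

/-- The deletion `M ＼ F`: the restriction of `M` to the complement of `F`;
its circuits are exactly the circuits of `M` disjoint from `F`. -/
def Matroid.del (M : Matroid α) (F : Set α) : Matroid α := M.restrict (M.E \ F)

/-- A matching in `M`: a set of pairwise disjoint circuits of `M`. -/
def Matroid.IsMatching (M : Matroid α) (𝒜 : Set (Set α)) : Prop :=
  (∀ C ∈ 𝒜, M.IsCircuit' C) ∧ 𝒜.Pairwise Disjoint

/-- `M` is matchable if its ground set can be partitioned into circuits of `M`. -/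
def Matroid.Matchable (M : Matroid α) : Prop :=
  ∃ 𝒜 : Set (Set α), M.IsMatching 𝒜 ∧ ⋃₀ 𝒜 = M.E

/-- `M` is finite matching extendable (f.m.e.): for every finite matching `𝒜` and every
ground-set element `e ∉ ⋃₀ 𝒜` there is a circuit through `e` disjoint from `⋃₀ 𝒜`. -/
def Matroid.FME (M : Matroid α) : Prop :=
  ∀ 𝒜 : Set (Set α), 𝒜.Finite → M.IsMatching 𝒜 → ∀ e ∈ M.E \ ⋃₀ 𝒜,
    ∃ C, M.IsCircuit' C ∧ e ∈ C ∧ C ∩ ⋃₀ 𝒜 = ∅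

variable {M : Matroid α}

theorem isMatching_empty (M : Matroid α) : M.IsMatching ∅ :=
  ⟨forall_mem_empty.2 trivial, pairwise_empty _⟩

theorem isMatching_insert {𝒜 : Set (Set α)} {C : Set α} (h𝒜 : M.IsMatching 𝒜)
    (hC : M.IsCircuit' C) (hdisj : Disjoint C (⋃₀ 𝒜)) : M.IsMatching (insert C 𝒜) :=
  ⟨forall_mem_insert.2 ⟨hC, h𝒜.1⟩,
    h𝒜.2.insert_of_symm fun D hD _ ↦ disjoint_sUnion_right.1 hdisj D hD⟩

theorem isMatching_sUnion_of_directedOn {𝒮 : Set (Set (Set α))} (hdir : DirectedOn (· ⊆ ·) 𝒮)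
    (h𝒮 : ∀ 𝒜 ∈ 𝒮, M.IsMatching 𝒜) : M.IsMatching (⋃₀ 𝒮) :=
  ⟨fun C ⟨𝒜, h𝒜, hC⟩ ↦ (h𝒮 𝒜 h𝒜).1 C hC,
    (pairwise_sUnion hdir).2 fun 𝒜 h𝒜 ↦ (h𝒮 𝒜 h𝒜).2⟩

theorem sUnion_subset_ground_of_isMatching {𝒜 : Set (Set α)} (h𝒜 : M.IsMatching 𝒜) :
    ⋃₀ 𝒜 ⊆ M.E :=
  sUnion_subset fun C hC ↦ (h𝒜.1 C hC).prop.subset_ground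

/-- The finite matchings of `M`, ordered by inclusion: the poset of finite approximations to a
partition of the ground set into circuits. -/
abbrev FiniteMatching (M : Matroid α) : Type _ :=
  {𝒜 : Set (Set α) // 𝒜.Finite ∧ M.IsMatching 𝒜}

theorem isCofinal_finiteMatching_covering (hfme : M.FME) {e : α} (he : e ∈ M.E) :
    IsCofinal {𝒜 : FiniteMatching M | e ∈ ⋃₀ 𝒜.1} := by
  rintro ⟨𝒜, hfin, h𝒜⟩
  by_cases hcov : e ∈ ⋃₀ 𝒜
  · exact ⟨⟨𝒜, hfin, h𝒜⟩, hcov, le_rfl⟩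
  · obtain ⟨C, hC, heC, hdisj⟩ := hfme 𝒜 hfin h𝒜 e ⟨he, hcov⟩
    have hinsert : M.IsMatching (insert C 𝒜) :=
      isMatching_insert h𝒜 hC (disjoint_iff_inter_eq_empty.2 hdisj)
    exact ⟨⟨insert C 𝒜, hfin.insert C, hinsert⟩, ⟨C, mem_insert C 𝒜, heC⟩, subset_insert C 𝒜⟩

theorem exists_directedOn_finiteMatching_covering (hcount : M.E.Countable) (hfme : M.FME) :
    ∃ 𝒮 : Set (FiniteMatching M), DirectedOn (· ≤ ·) 𝒮 ∧ ∀ e ∈ M.E, ∃ 𝒜 ∈ 𝒮, e ∈ ⋃₀ 𝒜.1 := by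
  let _ : Encodable M.E := hcount.toEncodable
  let start : FiniteMatching M := ⟨∅, finite_empty, isMatching_empty M⟩
  let covering (e : M.E) : Order.Cofinal (FiniteMatching M) :=
    ⟨_, isCofinal_finiteMatching_covering hfme e.2⟩
  refine ⟨Order.idealOfCofinals start covering, Order.Ideal.directed _, fun e he ↦ ?_⟩
  obtain ⟨𝒜, hcov, h𝒜⟩ := Order.cofinal_meets_idealOfCofinals start covering ⟨e, he⟩
  exact ⟨𝒜, h𝒜, hcov⟩

theorem fme_countable_matchable_general (M : Matroid α) (hcount : M.E.Countable)
    (hfme : M.FME) : M.Matchable := by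
  obtain ⟨𝒮, hdir, hcov⟩ := exists_directedOn_finiteMatching_covering hcount hfme
  have hmatching : M.IsMatching (⋃₀ (Subtype.val '' 𝒮)) :=
    isMatching_sUnion_of_directedOn (directedOn_image.2 hdir)
      (forall_mem_image.2 fun 𝒜 _ ↦ 𝒜.2.2)
  refine ⟨_, hmatching, (sUnion_subset_ground_of_isMatching hmatching).antisymm fun e he ↦ ?_⟩
  obtain ⟨𝒜, h𝒜, C, hC, heC⟩ := hcov e he
  exact ⟨C, ⟨𝒜, mem_image_of_mem _ h𝒜, hC⟩, heC⟩

/-- Every finitary finite-matching-extendable matroid with countable ground set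
is matchable. -/
theorem fme_countable_matchable (M : Matroid α) [M.Finitary] (hcount : M.E.Countable)
    (hfme : M.FME) : M.Matchable :=
  fme_countable_matchable_general M hcount hfme
end

section
/- Let M be the matroid on ground set ℤ whose circuits are exactly the 3-element subsets of ℤ (the rank-2 uniform matroid on ℤ). Let O consist, for each triple i < j < k of integers, of the signed set on {i, j, k} assigning +1 to i and k and −1 to j, together with its negative, and nothing else; let O* consist, for each n ∈ ℤ, of the signed set on ℤ ∖ {n} assigning +1 to every m < n and −1 to every m > n, together with its negative, and nothing else. Then: (i) the cocircuits of M are exactly the sets ℤ ∖ {n} for n ∈ ℤ; (ii) O and O* satisfy the orthogonality axiom, so (M, O, O*) is a finitary oriented matroid; and (iii) no member of O is positive and no member of O* is positive. In particular, there exists a finitary oriented matroid with neither a positive circuit nor a positive cocircuit, so the Farkas lemma fails for general finitary oriented matroids. -/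
/-!
In a uniform matroid of rank `r`, the independent sets are those with at most `r` elements and the
spanning sets are those with at least `r`. The cocircuits are the complements of the maximal
nonspanning sets, so for `r = 2` they are the complements of points.

The signs `+ - +` on `i < j < k` are orthogonal to the cut at `n` because they agree with it at one
element and disagree at another: respectively `j` and `k` if `n < j`, `i` and `j` if `j < n`, and
`i` and `k` if `n = j`. Both kinds of signing take both signs, so none is positive.
-/

open Set Function

variable {α : Type*}

/-- A circuit of a matroid `M`: a minimal dependent set. A cocircuit of `M` is a
circuit of the dual matroid `M✶`. -/
def Matroid.IsCircuitOrig (M : Matroid α) (C : Set α) : Prop := Minimal M.Dep C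

/-- A signed set, encoded as an integer-valued function taking values `1` or `-1` on its
support (which plays the role of the domain of the signed set) and `0` elsewhere. -/
def IsSignedSet (g : α → ℤ) : Prop := ∀ e ∈ Function.support g, g e = 1 ∨ g e = -1

/-- A signed set is positive if it is constantly `+1` on its domain. -/
def IsPositive (g : α → ℤ) : Prop := ∀ e ∈ Function.support g, g e = 1

/-- `O` is a signature of the set-system `𝒞`: it consists of exactly two signings of each
member of `𝒞`, these two being negatives of each other, and nothing else. -/
structure IsSignature (𝒞 : Set (Set α)) (O : Set (α → ℤ)) : Prop where
  signed : ∀ g ∈ O, IsSignedSet g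
  dom_mem : ∀ g ∈ O, Function.support g ∈ 𝒞
  exists_signing : ∀ C ∈ 𝒞, ∃ g ∈ O, Function.support g = C
  neg_mem : ∀ g ∈ O, -g ∈ O
  eq_or_eq_neg : ∀ g ∈ O, ∀ h ∈ O, Function.support g = Function.support h → h = g ∨ h = -g

/-- `(M, O, Ostar)` is an oriented matroid: `O` is a signature of the circuits of `M`,
`Ostar` is a signature of the cocircuits of `M`, and orthogonality holds: whenever the
domains of `C ∈ O` and `D ∈ Ostar` intersect, the restriction of `C` to the (finite)
intersection is neither equal to, nor the negative of, the restriction of `D`. -/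
structure IsOrientation (M : Matroid α) (O Ostar : Set (α → ℤ)) : Prop where
  circuit_signature : IsSignature {C | M.IsCircuitOrig C} O
  cocircuit_signature : IsSignature {D | M✶.IsCircuitOrig D} Ostar
  orthogonality : ∀ C ∈ O, ∀ D ∈ Ostar,
    (Function.support C ∩ Function.support D).Nonempty →
      (¬ ∀ e ∈ Function.support C ∩ Function.support D, C e = D e) ∧
      (¬ ∀ e ∈ Function.support C ∩ Function.support D, C e = - D e)

/-- The oriented matroid is binary: `∑_{e ∈ dom C ∩ dom D} C(e)·D(e) = 0` for every
signed circuit `C ∈ O` and signed cocircuit `D ∈ Ostar` (a finite sum, since circuits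
of a finitary matroid are finite). -/
def IsBinaryOrientation (O Ostar : Set (α → ℤ)) : Prop :=
  ∀ C ∈ O, ∀ D ∈ Ostar, ∑ᶠ e, C e * D e = 0

/-- The oriented matroid is balanced: in every signed cocircuit, the set of positive
elements and the set of negative elements have the same cardinality. -/
def IsBalanced (Ostar : Set (α → ℤ)) : Prop :=
  ∀ D ∈ Ostar, Cardinal.mk {e : α | D e = 1} = Cardinal.mk {e : α | D e = -1}

/-- The signed set on `{i, j, k}` (for `i < j < k`) assigning `+1` to `i` and `k`
and `-1` to `j`. -/
def tripleSign (i j k : ℤ) : ℤ → ℤ :=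
  fun m => if m = i then 1 else if m = j then -1 else if m = k then 1 else 0

/-- The signed set on `ℤ \ {n}` assigning `+1` to every `m < n` and `-1` to
every `m > n`. -/
def cutSign (n : ℤ) : ℤ → ℤ :=
  fun m => if m < n then 1 else if n < m then -1 else 0

theorem encard_eq_natCast_iff_finite_and_ncard_eq {s : Set α} {n : ℕ} :
    s.encard = n ↔ s.Finite ∧ s.ncard = n :=
  ⟨fun h => ⟨finite_of_encard_eq_coe h, by simp [ncard, h]⟩,
    fun ⟨hs, h⟩ => by rw [← hs.cast_ncard_eq, h]⟩

section Uniform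

/-- `M` is a uniform matroid of rank `r`: its independent sets are the subsets of the ground set
with at most `r` elements. Its rank is really `r` only if the ground set has at least `r`
elements; this is not part of the definition. -/
def IsUniformMatroid (M : Matroid α) (r : ℕ) : Prop :=
  ∀ I, M.Indep I ↔ I ⊆ M.E ∧ I.encard ≤ r

namespace IsUniformMatroid

variable {M : Matroid α} {r : ℕ}

theorem of_isCircuit_iff (h : ∀ C, M.IsCircuit C ↔ C ⊆ M.E ∧ C.encard = r + 1) :
    IsUniformMatroid M r := by
  intro I
  rw [Matroid.indep_iff_forall_subset_not_isCircuit', and_comm]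
  refine and_congr_right fun hIE => ⟨fun hI => ?_, fun hI C hCI hC => ?_⟩
  · by_contra! hlt
    obtain ⟨C, hCI, hC⟩ := exists_subset_encard_eq (Order.add_one_le_of_lt hlt)
    exact hI C hCI ((h C).2 ⟨hCI.trans hIE, hC⟩)
  · have hle : ((r + 1 : ℕ) : ℕ∞) ≤ r := by
      simpa [((h C).1 hC).2] using (encard_le_encard hCI).trans hI
    exact absurd (ENat.natCast_le_natCast.1 hle) (Nat.not_succ_le_self r)

theorem isBase_iff (hM : IsUniformMatroid M r) (hr : r ≤ M.E.encard) {B : Set α} :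
    M.IsBase B ↔ B ⊆ M.E ∧ B.encard = r := by
  refine ⟨fun hB => ⟨hB.subset_ground, ?_⟩, fun ⟨hBE, hB⟩ => ?_⟩
  · obtain ⟨J, hBJ, hJE, hJ⟩ :=
      exists_superset_subset_encard_eq hB.subset_ground ((hM B).1 hB.indep).2 hr
    rwa [hB.eq_of_subset_indep ((hM J).2 ⟨hJE, hJ.le⟩) hBJ]
  · refine Matroid.isBase_iff_maximal_indep.2 ⟨(hM B).2 ⟨hBE, hB.le⟩, fun J hJ hBJ => ?_⟩
    have hJB : J.encard ≤ B.encard := ((hM J).1 hJ).2.trans hB.ge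
    exact ((finite_of_encard_eq_coe hB).eq_of_subset_of_encard_le hBJ hJB).ge

theorem spanning_iff (hM : IsUniformMatroid M r) (hr : r ≤ M.E.encard) {X : Set α} :
    M.Spanning X ↔ X ⊆ M.E ∧ r ≤ X.encard := by
  rw [Matroid.spanning_iff_exists_isBase_subset', and_comm]
  refine and_congr_right fun hXE => ⟨fun ⟨B, hB, hBX⟩ => ?_, fun hX => ?_⟩
  · exact ((hM.isBase_iff hr).1 hB).2.ge.trans (encard_le_encard hBX)
  · obtain ⟨B, hBX, hB⟩ := exists_subset_encard_eq hX
    exact ⟨B, (hM.isBase_iff hr).2 ⟨hBX.trans hXE, hB⟩, hBX⟩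

theorem isCocircuit_iff (hM : IsUniformMatroid M r) (hr : r ≤ M.E.encard) {K : Set α} :
    M.IsCocircuit K ↔ K ⊆ M.E ∧ (M.E \ K).encard + 1 = r := by
  have nonspanning_iff (X : Set α) : ¬ M.Spanning (M.E \ X) ↔ (M.E \ X).encard < r := by
    rw [hM.spanning_iff hr, and_iff_right sdiff_subset, not_le]
  refine ⟨fun hK => ⟨hK.subset_ground, ?_⟩, fun ⟨hKE, hK⟩ => ?_⟩
  · obtain ⟨e, he⟩ := hK.nonempty
    rw [Matroid.isCocircuit_iff_minimal_compl_nonspanning] at hK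
    have hspan : M.Spanning (M.E \ (K \ {e})) :=
      not_not.1 (hK.not_prop_of_ssubset (sdiff_singleton_ssubset.2 he))
    refine (Order.add_one_le_of_lt ((nonspanning_iff K).1 hK.prop)).antisymm ?_
    calc (r : ℕ∞) ≤ (M.E \ (K \ {e})).encard := ((hM.spanning_iff hr).1 hspan).2
      _ ≤ (insert e (M.E \ K)).encard := encard_le_encard (by grind)
      _ ≤ (M.E \ K).encard + 1 := encard_insert_le _ _
  · have hfin : (M.E \ K).Finite := by
      rw [← encard_lt_top_iff]
      exact (le_self_add.trans hK.le).trans_lt (ENat.natCast_lt_top r)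
    have lt_iff (X : Set α) :
        (M.E \ X).encard < r ↔ (M.E \ X).encard ≤ (M.E \ K).encard := by
      rw [← hK, ENat.lt_add_one_iff hfin.encard_lt_top.ne]
    simp only [Matroid.isCocircuit_iff_minimal_compl_nonspanning, nonspanning_iff, lt_iff]
    refine ⟨le_rfl, fun X hX hXK => ?_⟩
    have heq : M.E \ K = M.E \ X :=
      hfin.eq_of_subset_of_encard_le (sdiff_subset_sdiff_right hXK) hX
    intro e he
    by_contra heX
    exact (heq.ge ⟨hKE he, heX⟩).2 he

theorem isCocircuit_iff_of_rank_two (hM : IsUniformMatroid M 2) (hE : 2 ≤ M.E.encard) {K : Set α} :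
    M.IsCocircuit K ↔ ∃ e ∈ M.E, K = M.E \ {e} := by
  have hpoint : (M.E \ K).encard + 1 = (2 : ℕ) ↔ ∃ e, M.E \ K = {e} := by
    rw [← encard_eq_one, Nat.cast_two, ← one_add_one_eq_two]
    exact (ENat.add_left_injective_of_ne_top ENat.one_ne_top).eq_iff
  rw [hM.isCocircuit_iff hE, hpoint]
  constructor
  · rintro ⟨hKE, e, he⟩
    exact ⟨e, (he.ge rfl).1, by rw [← he, sdiff_sdiff_cancel_left hKE]⟩
  · rintro ⟨e, he, rfl⟩
    exact ⟨sdiff_subset, e, sdiff_sdiff_cancel_left (singleton_subset_iff.2 he)⟩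

end IsUniformMatroid

end Uniform

section Signings

open scoped Pointwise

theorem exists_eq_or_eq_neg_of_mem_union_neg {G : Set (α → ℤ)} {g : α → ℤ} (hg : g ∈ G ∪ -G) :
    ∃ f ∈ G, (g = f ∨ g = -f) ∧ support g = support f := by
  rcases hg with hg | hg
  · exact ⟨g, hg, Or.inl rfl, rfl⟩
  · exact ⟨-g, hg, Or.inr (neg_neg g).symm, (support_neg g).symm⟩

theorem IsSignedSet.neg {g : α → ℤ} (hg : IsSignedSet g) : IsSignedSet (-g) := by
  intro e he
  rw [support_neg] at he
  rcases hg e he with h | h <;> simp [h]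

theorem isSignature_union_neg {G : Set (α → ℤ)} (hsigned : ∀ g ∈ G, IsSignedSet g)
    (hinj : G.InjOn support) : IsSignature (support '' G) (G ∪ -G) where
  signed := by
    rintro g (hg | hg)
    · exact hsigned g hg
    · exact neg_neg g ▸ (hsigned (-g) hg).neg
  dom_mem g hg := by
    obtain ⟨f, hf, -, hfg⟩ := exists_eq_or_eq_neg_of_mem_union_neg hg
    exact ⟨f, hf, hfg.symm⟩
  exists_signing := by
    rintro _ ⟨g, hg, rfl⟩
    exact ⟨g, Or.inl hg, rfl⟩
  neg_mem g hg := by simpa [or_comm] using hg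
  eq_or_eq_neg g hg h hh hgh := by
    obtain ⟨f, hf, hgf, hf_supp⟩ := exists_eq_or_eq_neg_of_mem_union_neg hg
    obtain ⟨f', hf', hhf', hf'_supp⟩ := exists_eq_or_eq_neg_of_mem_union_neg hh
    obtain rfl : f = f' := hinj hf hf' (by rw [← hf_supp, ← hf'_supp, hgh])
    rcases hgf with rfl | rfl <;> rcases hhf' with rfl | rfl <;> simp

/-- Orthogonality of two signed sets that meet: they agree at some common element and disagree at
another one. -/
def IsSignOrthogonal (f g : α → ℤ) : Prop := (∃ e, 0 < f e * g e) ∧ ∃ e, f e * g e < 0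

namespace IsSignOrthogonal

variable {f g : α → ℤ}

theorem neg_left (h : IsSignOrthogonal f g) : IsSignOrthogonal (-f) g := by
  simpa [IsSignOrthogonal, and_comm] using h

theorem symm (h : IsSignOrthogonal f g) : IsSignOrthogonal g f := by
  simpa only [IsSignOrthogonal, mul_comm] using h

theorem neg_right (h : IsSignOrthogonal f g) : IsSignOrthogonal f (-g) := h.symm.neg_left.symm

theorem not_forall_eq (h : IsSignOrthogonal f g) :
    ¬ ∀ e ∈ support f ∩ support g, f e = g e := by
  obtain ⟨-, e, he⟩ := h
  intro heq
  have hfg := heq e (mul_ne_zero_iff.1 he.ne)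
  rw [hfg] at he
  exact he.not_ge (mul_self_nonneg _)

theorem not_forall_eq_neg (h : IsSignOrthogonal f g) :
    ¬ ∀ e ∈ support f ∩ support g, f e = -g e := by
  simpa using h.neg_right.not_forall_eq

theorem of_mem_union_neg {G H : Set (α → ℤ)} (h : ∀ f ∈ G, ∀ g ∈ H, IsSignOrthogonal f g)
    (hf : f ∈ G ∪ -G) (hg : g ∈ H ∪ -H) : IsSignOrthogonal f g := by
  obtain ⟨f', hf', hff', -⟩ := exists_eq_or_eq_neg_of_mem_union_neg hf
  obtain ⟨g', hg', hgg', -⟩ := exists_eq_or_eq_neg_of_mem_union_neg hg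
  have hfg := h f' hf' g' hg'
  rcases hff' with rfl | rfl <;> rcases hgg' with rfl | rfl
  exacts [hfg, hfg.neg_right, hfg.neg_left, hfg.neg_left.neg_right]

end IsSignOrthogonal

theorem not_isPositive_of_apply_neg {g : α → ℤ} {e : α} (he : g e < 0) : ¬ IsPositive g := by
  intro hg
  rw [hg e he.ne] at he
  exact he.not_gt one_pos

theorem not_isPositive_of_mem_union_neg {G : Set (α → ℤ)} (hpos : ∀ g ∈ G, ∃ e, 0 < g e)
    (hneg : ∀ g ∈ G, ∃ e, g e < 0) : ∀ g ∈ G ∪ -G, ¬ IsPositive g := by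
  rintro g (hg | hg)
  · obtain ⟨e, he⟩ := hneg g hg
    exact not_isPositive_of_apply_neg he
  · obtain ⟨e, he⟩ := hpos (-g) hg
    exact not_isPositive_of_apply_neg (neg_pos.1 he)

end Signings

section Triples

variable [LinearOrder α]

theorem encard_eq_three_iff_exists_lt_lt {C : Set α} :
    C.encard = 3 ↔ ∃ i j k, i < j ∧ j < k ∧ C = {i, j, k} := by
  refine ⟨fun hC => ?_, ?_⟩
  · obtain ⟨s, rfl⟩ := (finite_of_encard_eq_coe hC).exists_finset_coe
    have hs : s.card = 3 := by exact_mod_cast (encard_coe_eq_coe_finsetCard s).symm.trans hC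
    let e := s.orderEmbOfFin hs
    refine ⟨e 0, e 1, e 2, e.strictMono (by simp), e.strictMono (by simp), ?_⟩
    calc (s : Set α) = range e := (s.range_orderEmbOfFin hs).symm
      _ = {e 0, e 1, e 2} := by
        ext m
        simp only [mem_range, Fin.exists_fin_succ]
        simp [eq_comm]
  · rintro ⟨i, j, k, hij, hjk, rfl⟩
    exact encard_eq_three.2 ⟨i, j, k, hij.ne, (hij.trans hjk).ne, hjk.ne, rfl⟩

theorem eq_of_insert_pair_eq_of_lt_of_lt {i j k i' j' k' : α} (hij : i < j) (hjk : j < k)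
    (hij' : i' < j') (hjk' : j' < k') (h : ({i, j, k} : Set α) = {i', j', k'}) :
    i = i' ∧ j = j' ∧ k = k' := by
  have hmem (m : α) : m ∈ ({i, j, k} : Set α) ↔ m ∈ ({i', j', k'} : Set α) := by rw [h]
  simp only [mem_insert_iff, mem_singleton_iff] at hmem
  grind [hmem i, hmem j, hmem k, hmem i', hmem j', hmem k']

end Triples

section KasparSignings

/-- One signed circuit of Kaspar's example from each pair of opposite ones: the one whose extreme
elements are positive. -/
def alternatingTriples : Set (ℤ → ℤ) := {g | ∃ i j k, i < j ∧ j < k ∧ g = tripleSign i j k}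

theorem support_tripleSign (i j k : ℤ) : support (tripleSign i j k) = {i, j, k} := by
  grind [tripleSign, mem_support]

theorem support_cutSign (n : ℤ) : support (cutSign n) = univ \ {n} := by
  grind [cutSign, mem_support]

theorem isSignedSet_tripleSign (i j k : ℤ) : IsSignedSet (tripleSign i j k) := by
  grind [IsSignedSet, tripleSign, mem_support]

theorem isSignedSet_cutSign (n : ℤ) : IsSignedSet (cutSign n) := by
  grind [IsSignedSet, cutSign, mem_support]

theorem injOn_support_alternatingTriples : alternatingTriples.InjOn support := by
  rintro _ ⟨i, j, k, hij, hjk, rfl⟩ _ ⟨i', j', k', hij', hjk', rfl⟩ h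
  simp only [support_tripleSign] at h
  obtain ⟨rfl, rfl, rfl⟩ := eq_of_insert_pair_eq_of_lt_of_lt hij hjk hij' hjk' h
  rfl

theorem injOn_support_range_cutSign : (range cutSign).InjOn support := by
  rintro _ ⟨n, rfl⟩ _ ⟨n', rfl⟩ h
  obtain rfl : n = n' := by simpa [support_cutSign, ← compl_eq_univ_sdiff] using h
  rfl

theorem image_support_alternatingTriples :
    support '' alternatingTriples = {C | C.encard = 3} := by
  ext C
  simp only [alternatingTriples, mem_image, mem_ofPred_eq, encard_eq_three_iff_exists_lt_lt]
  constructor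
  · rintro ⟨_, ⟨i, j, k, hij, hjk, rfl⟩, rfl⟩
    exact ⟨i, j, k, hij, hjk, support_tripleSign i j k⟩
  · rintro ⟨i, j, k, hij, hjk, rfl⟩
    exact ⟨_, ⟨i, j, k, hij, hjk, rfl⟩, support_tripleSign i j k⟩

theorem image_support_range_cutSign :
    support '' range cutSign = {D | ∃ n, D = univ \ {n}} := by
  ext D
  simp [support_cutSign, eq_comm]

theorem isSignOrthogonal_tripleSign_cutSign {i j k : ℤ} (hij : i < j) (hjk : j < k) (n : ℤ) :
    IsSignOrthogonal (tripleSign i j k) (cutSign n) := by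
  rcases lt_trichotomy n j with hn | hn | hn
  · exact ⟨⟨j, by grind [tripleSign, cutSign]⟩, ⟨k, by grind [tripleSign, cutSign]⟩⟩
  · exact ⟨⟨i, by grind [tripleSign, cutSign]⟩, ⟨k, by grind [tripleSign, cutSign]⟩⟩
  · exact ⟨⟨i, by grind [tripleSign, cutSign]⟩, ⟨j, by grind [tripleSign, cutSign]⟩⟩

open scoped Pointwise

theorem not_isPositive_of_mem_alternatingTriples_union_neg :
    ∀ g ∈ alternatingTriples ∪ -alternatingTriples, ¬ IsPositive g := by
  apply not_isPositive_of_mem_union_neg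
  · rintro _ ⟨i, j, k, -, -, rfl⟩
    exact ⟨i, by grind [tripleSign]⟩
  · rintro _ ⟨i, j, k, hij, -, rfl⟩
    exact ⟨j, by grind [tripleSign]⟩

theorem not_isPositive_of_mem_range_cutSign_union_neg :
    ∀ g ∈ range cutSign ∪ -range cutSign, ¬ IsPositive g := by
  apply not_isPositive_of_mem_union_neg
  · rintro _ ⟨n, rfl⟩
    exact ⟨n - 1, by grind [cutSign]⟩
  · rintro _ ⟨n, rfl⟩
    exact ⟨n + 1, by grind [cutSign]⟩

theorem isOrientation_alternatingTriples_range_cutSign {M : Matroid ℤ}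
    (hcircuit : ∀ C, M.IsCircuit C ↔ C.encard = 3)
    (hcocircuit : ∀ D, M.IsCocircuit D ↔ ∃ n, D = univ \ {n}) :
    IsOrientation M (alternatingTriples ∪ -alternatingTriples)
      (range cutSign ∪ -range cutSign) where
  circuit_signature := by
    have hdom : {C | M.IsCircuitOrig C} = support '' alternatingTriples :=
      image_support_alternatingTriples ▸ Set.ext hcircuit
    rw [hdom]
    refine isSignature_union_neg ?_ injOn_support_alternatingTriples
    rintro _ ⟨i, j, k, -, -, rfl⟩
    exact isSignedSet_tripleSign i j k
  cocircuit_signature := by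
    have hdom : {D | M✶.IsCircuitOrig D} = support '' range cutSign :=
      image_support_range_cutSign ▸ Set.ext hcocircuit
    rw [hdom]
    exact isSignature_union_neg (forall_mem_range.2 isSignedSet_cutSign)
      injOn_support_range_cutSign
  orthogonality C hC D hD _ := by
    have horth : IsSignOrthogonal C D := by
      refine .of_mem_union_neg ?_ hC hD
      rintro _ ⟨i, j, k, hij, hjk, rfl⟩ _ ⟨n, rfl⟩
      exact isSignOrthogonal_tripleSign_cutSign hij hjk n
    exact ⟨horth.not_forall_eq, horth.not_forall_eq_neg⟩

theorem setOf_tripleSign_or_neg_eq :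
    {g | ∃ i j k : ℤ, i < j ∧ j < k ∧ (g = tripleSign i j k ∨ g = -tripleSign i j k)} =
      alternatingTriples ∪ -alternatingTriples := by
  ext g
  simp only [alternatingTriples, mem_ofPred_eq, mem_union, mem_neg, neg_eq_iff_eq_neg]
  grind

theorem setOf_cutSign_or_neg_eq :
    {g | ∃ n : ℤ, g = cutSign n ∨ g = -cutSign n} = range cutSign ∪ -range cutSign := by
  ext g
  simp only [mem_ofPred_eq, mem_union, mem_neg, mem_range]
  grind

end KasparSignings

/-- Kaspar's example: for the rank-2 uniform matroid `M` on `ℤ` (whose circuits are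
exactly the 3-element subsets of `ℤ`), with `O` consisting of the signed sets
`tripleSign i j k` (`i < j < k`) and their negatives and `Ostar` consisting of the
signed sets `cutSign n` (`n ∈ ℤ`) and their negatives:
(i) the cocircuits of `M` are exactly the sets `ℤ \ {n}`;
(ii) `(M, O, Ostar)` is a finitary oriented matroid (in particular orthogonality holds);
(iii) no member of `O` and no member of `Ostar` is positive.
In particular, there is a finitary oriented matroid with neither a positive signed
circuit nor a positive signed cocircuit, so the Farkas lemma fails in general. -/
theorem kaspar_example (M : Matroid ℤ) (hE : M.E = Set.univ)
    (hcirc : ∀ C : Set ℤ, M.IsCircuitOrig C ↔ C.Finite ∧ C.ncard = 3)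
    (O Ostar : Set (ℤ → ℤ))
    (hO : O = {g | ∃ i j k : ℤ, i < j ∧ j < k ∧
      (g = tripleSign i j k ∨ g = -tripleSign i j k)})
    (hOstar : Ostar = {g | ∃ n : ℤ, g = cutSign n ∨ g = -cutSign n}) :
    (∀ D : Set ℤ, M✶.IsCircuitOrig D ↔ ∃ n : ℤ, D = Set.univ \ {n}) ∧
    (M.Finitary ∧ IsOrientation M O Ostar) ∧
    ((∀ g ∈ O, ¬ IsPositive g) ∧ (∀ g ∈ Ostar, ¬ IsPositive g)) ∧
    ∃ (β : Type) (M' : Matroid β) (O' Ostar' : Set (β → ℤ)),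
      M'.Finitary ∧ IsOrientation M' O' Ostar' ∧
      (∀ g ∈ O', ¬ IsPositive g) ∧ (∀ g ∈ Ostar', ¬ IsPositive g) := by
  have hcircuit (C : Set ℤ) : M.IsCircuit C ↔ C.encard = 3 :=
    (hcirc C).trans encard_eq_natCast_iff_finite_and_ncard_eq.symm
  have huniform : IsUniformMatroid M 2 := .of_isCircuit_iff fun C => by
    simp only [hcircuit, hE, subset_univ, true_and]
    norm_num
  have hcocircuit (D : Set ℤ) : M.IsCocircuit D ↔ ∃ n, D = univ \ {n} := by
    simpa [hE] using huniform.isCocircuit_iff_of_rank_two (by simp [hE])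
  have hfinitary : M.Finitary :=
    Matroid.finitary_iff_forall_isCircuit_finite.2 fun C hC => ((hcirc C).1 hC).1
  rw [setOf_tripleSign_or_neg_eq] at hO
  rw [setOf_cutSign_or_neg_eq] at hOstar
  subst hO hOstar
  have horient := isOrientation_alternatingTriples_range_cutSign hcircuit hcocircuit
  have hO_pos := not_isPositive_of_mem_alternatingTriples_union_neg
  have hOstar_pos := not_isPositive_of_mem_range_cutSign_union_neg
  exact ⟨hcocircuit, ⟨hfinitary, horient⟩, ⟨hO_pos, hOstar_pos⟩,
    ℤ, M, _, _, hfinitary, horient, hO_pos, hOstar_pos⟩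
end
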